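/- arXiv:2511.01073 — 2 statements merged into one kernel-verified Lean document; each statement's English description precedes it below -/
import Mathlib

section
/- Let q = nv+1 be a prime power and suppose that there exists a cyclic (R_{q,v},k,1) difference family whose base blocks are all zero-sum in 𝔽_q. Then there exists an EA(q)-additive (v,k,1)-design. -/
/-!
The points of the design are the `v`-th roots of unity `R`, and its blocks are all multiplicative
translates `g b` (`g ∈ R`) of the base blocks `b`, together with, when `v ≡ k (mod k(k-1))`, the
cosets `g H` of the group `H` of `k`-th roots of unity. When `v ≡ 1`, put `H = {1}` below.

Two distinct points `x, y` lie in a common translate of a base block exactly when `x / y ∉ H`,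
and then this block is unique, because `x / y` occurs exactly once as a ratio from a base block
(`existsUnique_translate`, `ratio_of_mem_translate`). In the remaining case they lie in the coset
`x H` and in no other block. All blocks are zero-sum: the base blocks by hypothesis, `H` because
it is invariant under multiplication by some `ζ ≠ 1`, and translates since
`∑ (g b) = g ∑ b`.
-/

/-- A `(v,k,1)`-design (Steiner 2-design) with point set `V` and block collection `Bs`. -/
def IsSteinerDesign {α : Type*} [DecidableEq α] (V : Finset α) (Bs : Finset (Finset α))
    (v k : ℕ) : Prop :=
  V.card = v ∧ (∀ b ∈ Bs, b ⊆ V ∧ b.card = k) ∧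
    ∀ x ∈ V, ∀ y ∈ V, x ≠ y → ∃! b, b ∈ Bs ∧ x ∈ b ∧ y ∈ b

/-- The list (multiset) of differences of a family of finite subsets of a multiplicative
structure: all ratios `x * y⁻¹` with `(x,y)` an ordered pair of distinct elements of a
common member. -/
def diffList {α : Type*} [DecidableEq α] [Mul α] [Inv α]
    (Fam : Finset (Finset α)) : Multiset α :=
  Fam.1.bind fun b => ((b ×ˢ b).filter fun p => p.1 ≠ p.2).1.map fun p => p.1 * p.2⁻¹

/-- `(R,H,k,lam)` difference family inside the "group" `R` (given as a finset of the
ambient structure): a family of `k`-subsets of `R` whose list of differences is `lam`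
times the set `R \ H`. -/
def IsDiffFamilyOn {α : Type*} [DecidableEq α] [Mul α] [Inv α]
    (R H : Finset α) (k lam : ℕ) (Fam : Finset (Finset α)) : Prop :=
  (∀ b ∈ Fam, b ⊆ R ∧ b.card = k) ∧ diffList Fam = lam • (R \ H).val

/-- A cyclic `(R,k,1)` difference family: `R` is (the finset of elements of) a cyclic
group of order `v ≡ 1` or `k (mod k(k-1))`, and the family is an `(R,H,k,1)` difference
family with `H` the subgroup of `R` of order `1` or `k`, respectively (in a cyclic group
the subgroup of order `k` consists of the solutions of `x^k = 1`). -/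
def IsCyclicDFOn {α : Type*} [DecidableEq α] [Monoid α] [Inv α]
    (R : Finset α) (k : ℕ) (Fam : Finset (Finset α)) : Prop :=
  (R.card % (k * (k - 1)) = 1 % (k * (k - 1)) ∧ IsDiffFamilyOn R ({1} : Finset α) k 1 Fam) ∨
  (R.card % (k * (k - 1)) = k % (k * (k - 1)) ∧
    IsDiffFamilyOn R (R.filter fun x => x ^ k = 1) k 1 Fam)

/-- The translates `g b`, for `g ∈ R` and `b ∈ Fam`. -/
def translates {F : Type*} [Field F] [DecidableEq F] (R : Finset F)
    (Fam : Finset (Finset F)) : Finset (Finset F) :=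
  Fam.biUnion fun b => R.image fun g => b.image fun a => g * a

lemma mem_translates {F : Type*} [Field F] [DecidableEq F] {R : Finset F}
    {Fam : Finset (Finset F)} {B : Finset F} :
    B ∈ translates R Fam ↔ ∃ b ∈ Fam, ∃ g ∈ R, b.image (fun a => g * a) = B := by
  simp [translates]

/-- With `lam = 1`, the elements of `R \ H` are exactly the ratios of distinct elements of a
common base block. -/
lemma exists_ratio {F : Type*} [Field F] [DecidableEq F] {R H : Finset F} {k : ℕ}
    {Fam : Finset (Finset F)} (h : IsDiffFamilyOn R H k 1 Fam) {d : F} :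
    d ∈ R \ H ↔ ∃ b ∈ Fam, ∃ a ∈ b, ∃ c ∈ b, a ≠ c ∧ a * c⁻¹ = d := by
  have h2 := h.2
  rw [one_smul] at h2
  rw [← Finset.mem_val, ← h2]
  simp [diffList, and_assoc]

/-- With `lam = 1`, a ratio determines the base block and the pair of elements it comes from. -/
lemma ratio_unique {F : Type*} [Field F] [DecidableEq F] {R H : Finset F} {k : ℕ}
    {Fam : Finset (Finset F)} (h : IsDiffFamilyOn R H k 1 Fam) {b b' : Finset F}
    (hb : b ∈ Fam) (hb' : b' ∈ Fam) {a c a' c' : F} (ha : a ∈ b) (hc : c ∈ b) (hac : a ≠ c)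
    (ha' : a' ∈ b') (hc' : c' ∈ b') (hac' : a' ≠ c') (hd : a * c⁻¹ = a' * c'⁻¹) :
    b = b' ∧ a = a' ∧ c = c' := by
  have h2 := h.2
  rw [one_smul] at h2
  -- The list of differences is the image of the multiset of triples `(b, (a, c))`.
  have key : diffList Fam = (Fam.1.sigma (σ := fun _ => F × F) fun b =>
      ((b ×ˢ b).filter fun p => p.1 ≠ p.2).1).map fun s => s.2.1 * s.2.2⁻¹ := by
    simp [diffList, Multiset.sigma, Multiset.map_bind, Multiset.map_map]
  have nd : (diffList Fam).Nodup := h2 ▸ (R \ H).nodup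
  rw [key] at nd
  have := Multiset.inj_on_of_nodup_map nd ⟨b, (a, c)⟩ (by simp [*]) ⟨b', (a', c')⟩
    (by simp [*]) hd
  simpa using this

/-- Distinct points of a common translate have their ratio outside `H`. -/
lemma ratio_of_mem_translate {F : Type*} [Field F] [DecidableEq F] {R H : Finset F} {k : ℕ}
    {Fam : Finset (Finset F)} (h : IsDiffFamilyOn R H k 1 Fam) (h0 : (0 : F) ∉ R)
    {B : Finset F} (hB : B ∈ translates R Fam) {x y : F} (hx : x ∈ B) (hy : y ∈ B)
    (hxy : x ≠ y) : x * y⁻¹ ∉ H := by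
  obtain ⟨b, hb, g, hg, rfl⟩ := mem_translates.1 hB
  obtain ⟨a, ha, rfl⟩ := Finset.mem_image.1 hx
  obtain ⟨c, hc, rfl⟩ := Finset.mem_image.1 hy
  have hg0 : g ≠ 0 := fun e => h0 (e ▸ hg)
  have : a * c⁻¹ ∈ R \ H := (exists_ratio h).2 ⟨b, hb, a, ha, c, hc, fun e => hxy (by rw [e]), rfl⟩
  have e : g * a * (g * c)⁻¹ = a * c⁻¹ := by
    rw [mul_inv, mul_mul_mul_comm, mul_inv_cancel₀ hg0, one_mul]
  rw [e]
  exact (Finset.mem_sdiff.1 this).2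

/-- Two points whose ratio is outside `H` lie in exactly one translate of a base block. -/
lemma existsUnique_translate {F : Type*} [Field F] [DecidableEq F] {R H : Finset F} {k : ℕ}
    {Fam : Finset (Finset F)} (h : IsDiffFamilyOn R H k 1 Fam) (h0 : (0 : F) ∉ R)
    (hdiv : ∀ x ∈ R, ∀ y ∈ R, x * y⁻¹ ∈ R) {x y : F} (hx : x ∈ R) (hy : y ∈ R)
    (hxy : x ≠ y) (hH : x * y⁻¹ ∉ H) : ∃! B, B ∈ translates R Fam ∧ x ∈ B ∧ y ∈ B := by
  have ne0 : ∀ z ∈ R, z ≠ 0 := fun z hz e => h0 (e ▸ hz)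
  obtain ⟨b, hb, a, ha, c, hc, hac, hd⟩ :=
    (exists_ratio h).1 (Finset.mem_sdiff.2 ⟨hdiv x hx y hy, hH⟩)
  have ha0 := ne0 a ((h.1 b hb).1 ha)
  have hc0 := ne0 c ((h.1 b hb).1 hc)
  have hy0 := ne0 y hy
  refine ⟨b.image fun z => x * a⁻¹ * z, ⟨mem_translates.2
    ⟨b, hb, x * a⁻¹, hdiv x hx a ((h.1 b hb).1 ha), rfl⟩, ?_, ?_⟩, ?_⟩
  · exact Finset.mem_image.2 ⟨a, ha, by field_simp⟩
  · refine Finset.mem_image.2 ⟨c, hc, ?_⟩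
    field_simp at hd ⊢
    linear_combination -hd
  · rintro B ⟨hB, hxB, hyB⟩
    obtain ⟨b', hb', g, hg, rfl⟩ := mem_translates.1 hB
    obtain ⟨a', ha', rfl⟩ := Finset.mem_image.1 hxB
    obtain ⟨c', hc', rfl⟩ := Finset.mem_image.1 hyB
    have hg0 := ne0 g hg
    have e : g * a' * (g * c')⁻¹ = a' * c'⁻¹ := by
      rw [mul_inv, mul_mul_mul_comm, mul_inv_cancel₀ hg0, one_mul]
    obtain ⟨rfl, rfl, rfl⟩ := ratio_unique h hb hb' ha hc hac ha' hc'
      (fun e => hxy (by rw [e])) (hd.trans e)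
    simp [ha0]

lemma card_roots_of_dvd {F : Type*} [Field F] [Fintype F] [DecidableEq F] {d : ℕ}
    (hd : d ∣ Fintype.card F - 1) (hd0 : 0 < d) :
    (Finset.univ.filter fun x : F => x ^ d = 1).card = d := by
  obtain ⟨g, hg⟩ := IsCyclic.exists_generator (α := Fˣ)
  have ho : orderOf g = Fintype.card F - 1 := by
    rw [orderOf_eq_card_of_forall_mem_zpowers hg, Nat.card_eq_fintype_card, Fintype.card_units]
  have hpos : 0 < Fintype.card F - 1 := by
    have := Fintype.one_lt_card (α := F)
    omega
  obtain ⟨m, hm⟩ := hd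
  have hp : IsPrimitiveRoot ((g : F) ^ m) d := by
    refine IsPrimitiveRoot.pow hpos ?_ (hm.trans (mul_comm _ _))
    rw [IsPrimitiveRoot.coe_units_iff, ← ho]
    exact IsPrimitiveRoot.orderOf g
  refine Eq.trans (congrArg Finset.card ?_) hp.card_nthRootsFinset
  ext x
  simp [Polynomial.mem_nthRootsFinset hd0]

lemma card_and_sum_translate {F : Type*} [Field F] [DecidableEq F] {g : F} (hg : g ≠ 0)
    (b : Finset F) : (b.image fun a => g * a).card = b.card ∧
      ∑ x ∈ b.image (fun a => g * a), x = g * ∑ x ∈ b, x := by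
  have hi : Function.Injective fun a : F => g * a := mul_right_injective₀ hg
  refine ⟨Finset.card_image_of_injective _ hi, ?_⟩
  rw [Finset.sum_image hi.injOn, Finset.mul_sum]

/-- Let `q = n*v + 1` be a prime power and suppose there exists a cyclic
`(R_{q,v},k,1)` difference family (where `R_{q,v}` is the group of `v`-th roots of unity
of `𝔽_q`) whose base blocks are all zero-sum in `𝔽_q`. Then there exists an
`EA(q)`-additive `(v,k,1)`-design. -/
theorem stmt5 (q n v k : ℕ) (hq : ∃ p m : ℕ, p.Prime ∧ 0 < m ∧ q = p ^ m)
    (hqnv : q = n * v + 1) (hvk : 2 < k ∧ k < v)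
    (F : Type*) [Field F] [Fintype F] [DecidableEq F] (hF : Fintype.card F = q)
    (Fam : Finset (Finset F))
    (hDF : IsCyclicDFOn (Finset.univ.filter fun x : F => x ^ v = 1) k Fam)
    (hzs : ∀ b ∈ Fam, ∑ x ∈ b, x = 0) :
    ∃ (V : Finset F) (Bs : Finset (Finset F)),
      IsSteinerDesign V Bs v k ∧ ∀ b ∈ Bs, ∑ x ∈ b, x = 0 := by
  obtain ⟨hk, hkv⟩ := hvk
  have hvd : v ∣ Fintype.card F - 1 := ⟨n, by rw [hF, hqnv, mul_comm]; simp⟩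
  have hcard := card_roots_of_dvd hvd (by omega)
  unfold IsCyclicDFOn at hDF
  rw [hcard] at hDF
  set R : Finset F := Finset.univ.filter fun x : F => x ^ v = 1 with hR
  have h0 : (0 : F) ∉ R := by simp [hR, zero_pow (by omega : v ≠ 0)]
  have hmul : ∀ x ∈ R, ∀ y ∈ R, x * y ∈ R := by
    intro x hx y hy
    simp only [hR, Finset.mem_filter, Finset.mem_univ, true_and] at *
    rw [mul_pow, hx, hy, one_mul]
  have hdiv : ∀ x ∈ R, ∀ y ∈ R, x * y⁻¹ ∈ R := by
    intro x hx y hy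
    simp only [hR, Finset.mem_filter, Finset.mem_univ, true_and] at *
    rw [mul_pow, inv_pow, hx, hy, inv_one, one_mul]
  have ne0 : ∀ z ∈ R, z ≠ 0 := fun z hz e => h0 (e ▸ hz)
  -- Translates of a family of zero-sum `k`-subsets of `R` are again zero-sum `k`-subsets of `R`.
  have hT : ∀ G : Finset (Finset F), (∀ b ∈ G, (b ⊆ R ∧ b.card = k) ∧ ∑ x ∈ b, x = 0) →
      ∀ B ∈ translates R G, (B ⊆ R ∧ B.card = k) ∧ ∑ x ∈ B, x = 0 := by
    intro G hG B hB
    obtain ⟨b, hb, g, hg, rfl⟩ := mem_translates.1 hB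
    obtain ⟨⟨h1, h2⟩, h3⟩ := hG b hb
    obtain ⟨h4, h5⟩ := card_and_sum_translate (ne0 g hg) b
    refine ⟨⟨?_, h4.trans h2⟩, by rw [h5, h3, mul_zero]⟩
    intro z hz
    obtain ⟨a, ha, rfl⟩ := Finset.mem_image.1 hz
    exact hmul g hg a (h1 ha)
  rcases hDF with ⟨-, hD⟩ | ⟨hmod, hD⟩
  · have hall := hT Fam fun b hb => ⟨hD.1 b hb, hzs b hb⟩
    refine ⟨R, translates R Fam, ⟨hcard, fun b hb => (hall b hb).1, ?_⟩,
      fun b hb => (hall b hb).2⟩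
    intro x hx y hy hxy
    refine existsUnique_translate hD h0 hdiv hx hy hxy ?_
    rw [Finset.mem_singleton]
    exact fun e => hxy ((mul_inv_eq_one₀ (ne0 y hy)).1 e)
  · have hkd : k ∣ v :=
      (Nat.ModEq.dvd_iff (show v ≡ k [MOD k * (k - 1)] from hmod) (dvd_mul_right _ _)).2 dvd_rfl
    have hHR : (R.filter fun x => x ^ k = 1) = Finset.univ.filter fun x : F => x ^ k = 1 := by
      ext x
      simp only [hR, Finset.mem_filter, Finset.mem_univ, true_and, and_iff_right_iff_imp]
      intro hx
      obtain ⟨t, rfl⟩ := hkd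
      rw [pow_mul, hx, one_pow]
    set H : Finset F := R.filter fun x => x ^ k = 1 with hH
    have hHc : H.card = k := by
      rw [hHR]
      exact card_roots_of_dvd (hkd.trans hvd) (by omega)
    have hHsub : H ⊆ R := Finset.filter_subset _ _
    have mH : ∀ z, z ∈ H ↔ z ^ k = 1 := fun z => by rw [hHR]; simp
    have hHs : ∑ x ∈ H, x = 0 := by
      obtain ⟨z, hz, hz1⟩ := Finset.exists_mem_ne (by omega : 1 < H.card) (1 : F)
      have hz0 := ne0 z (hHsub hz)
      have himg : H.image (fun a => z * a) = H := by
        refine Finset.eq_of_subset_of_card_le ?_ (card_and_sum_translate hz0 H).1.ge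
        intro w hw
        obtain ⟨a, ha, rfl⟩ := Finset.mem_image.1 hw
        rw [mH] at *
        rw [mul_pow, hz, ha, one_mul]
      have hs := (card_and_sum_translate hz0 H).2
      rw [himg] at hs
      have : (z - 1) * ∑ x ∈ H, x = 0 := by linear_combination -hs
      exact (mul_eq_zero.1 this).resolve_left (sub_ne_zero.2 hz1)
    have hall1 := hT Fam fun b hb => ⟨hD.1 b hb, hzs b hb⟩
    have hall2 := hT {H} fun b hb => by
      rw [Finset.mem_singleton.1 hb]
      exact ⟨⟨hHsub, hHc⟩, hHs⟩
    have hall : ∀ B ∈ translates R Fam ∪ translates R {H},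
        (B ⊆ R ∧ B.card = k) ∧ ∑ x ∈ B, x = 0 := fun B hB =>
      (Finset.mem_union.1 hB).elim (hall1 B) (hall2 B)
    -- A coset of `H` through `x` consists of the `w` with `w / x ∈ H`.
    have hcos : ∀ B ∈ translates R {H}, ∀ x ∈ B, ∀ w, w ∈ B ↔ w * x⁻¹ ∈ H := by
      intro B hB x hx w
      obtain ⟨b, hb, g, hg, rfl⟩ := mem_translates.1 hB
      rw [Finset.mem_singleton] at hb
      subst hb
      obtain ⟨a, ha, rfl⟩ := Finset.mem_image.1 hx
      have hg0 := ne0 g hg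
      have ha0 := ne0 a (hHsub ha)
      have ha1 := (mH a).1 ha
      have e : w * (g * a)⁻¹ ∈ H ↔ g⁻¹ * w ∈ H := by
        rw [mH, mH, mul_inv, mul_pow, mul_pow, mul_pow, inv_pow a, ha1, inv_one, mul_one, mul_comm]
      rw [e]
      constructor
      · intro hw
        obtain ⟨c, hc, rfl⟩ := Finset.mem_image.1 hw
        simpa [hg0] using hc
      · intro hw
        exact Finset.mem_image.2 ⟨_, hw, by field_simp⟩
    refine ⟨R, translates R Fam ∪ translates R {H}, ⟨hcard, fun b hb => (hall b hb).1, ?_⟩,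
      fun b hb => (hall b hb).2⟩
    intro x hx y hy hxy
    by_cases hd : x * y⁻¹ ∈ H
    · have hyB : y ∈ H.image (fun a => y * a) :=
        Finset.mem_image.2 ⟨1, (mH 1).2 (one_pow _), mul_one y⟩
      have hB : H.image (fun a => y * a) ∈ translates R {H} :=
        mem_translates.2 ⟨H, Finset.mem_singleton_self H, y, hy, rfl⟩
      refine ⟨_, ⟨Finset.mem_union_right _ hB, (hcos _ hB y hyB x).2 hd, hyB⟩, ?_⟩
      rintro B ⟨hB', hxB', hyB'⟩
      rcases Finset.mem_union.1 hB' with h1 | h1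
      · exact absurd hd (ratio_of_mem_translate hD h0 h1 hxB' hyB' hxy)
      · ext w
        rw [hcos _ h1 y hyB', hcos _ hB y hyB]
    · obtain ⟨B, ⟨hB, hxB, hyB⟩, hu⟩ := existsUnique_translate hD h0 hdiv hx hy hxy hd
      refine ⟨B, ⟨Finset.mem_union_left _ hB, hxB, hyB⟩, ?_⟩
      rintro B' ⟨hB', hxB', hyB'⟩
      rcases Finset.mem_union.1 hB' with h1 | h1
      · exact hu B' ⟨h1, hxB', hyB'⟩
      · exact absurd ((hcos _ h1 y hyB' x).1 hxB') hd
end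

section
/- Suppose there exists a cyclic (𝔽_{2^v}^*, 2^k−1, 1) difference family each of whose base blocks B has the property that B ∪ {0} is a k-dimensional 𝔽_2-subspace of 𝔽_{2^v}. Then there exists a 2-analog of a (v,k,1)-design, i.e., a set 𝓓 of k-dimensional 𝔽_2-subspaces of 𝔽_{2^v} such that every 2-dimensional 𝔽_2-subspace of 𝔽_{2^v} is contained in exactly one member of 𝓓. -/
section Translates

variable {F : Type*} [Field F] [Algebra (ZMod 2) F]

/-- The nonzero multiplicative translates of a family `𝓑` of `k`-dimensional subspaces form a
2-analog of a `(v,k,1)`-design as soon as every ratio `r ≠ 0, 1` is realised in some member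
(`hex`), and any two realisations of a ratio differ by a translation carrying one member of `𝓑`
onto the other (`huniq`). Translations are phrased through preimages: `S'` is a translate of `S`
if `z ∈ S' ↔ t * z ∈ S` for some `t ≠ 0`. -/
theorem exists_design_of_ratios [Fintype F] (k : ℕ) (𝓑 : Set (Submodule (ZMod 2) F))
    (hk : ∀ S ∈ 𝓑, Module.finrank (ZMod 2) S = k)
    (hex : ∀ r : F, r ≠ 0 → r ≠ 1 → ∃ S ∈ 𝓑, ∃ a ∈ S, ∃ b ∈ S, b ≠ 0 ∧ a = r * b)
    (huniq : ∀ S ∈ 𝓑, ∀ S' ∈ 𝓑, ∀ a ∈ S, ∀ b ∈ S, ∀ a' ∈ S', ∀ b' ∈ S',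
      a ≠ 0 → b ≠ 0 → a' ≠ 0 → b' ≠ 0 → a ≠ b → a * b⁻¹ = a' * b'⁻¹ →
      ∃ t : F, a' = t * a ∧ ∀ z, z ∈ S ↔ t * z ∈ S') :
    ∃ 𝓓 : Set (Submodule (ZMod 2) F),
      (∀ S ∈ 𝓓, Module.finrank (ZMod 2) S = k) ∧
      ∀ T : Submodule (ZMod 2) F, Module.finrank (ZMod 2) T = 2 →
        ∃! S, S ∈ 𝓓 ∧ T ≤ S := by
  refine ⟨{D | Module.finrank (ZMod 2) D = k ∧
    ∃ S ∈ 𝓑, ∃ t : F, t ≠ 0 ∧ ∀ z, z ∈ D ↔ t * z ∈ S}, fun S hS => hS.1, ?_⟩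
  intro T hT
  let e := Module.finBasisOfFinrankEq (ZMod 2) T hT
  obtain ⟨x, hx⟩ : ∃ x : F, x = e 0 := ⟨_, rfl⟩
  obtain ⟨y, hy⟩ : ∃ y : F, y = e 1 := ⟨_, rfl⟩
  have hx0 : x ≠ 0 := by
    rw [hx]; simpa using e.ne_zero 0
  have hy0 : y ≠ 0 := by
    rw [hy]; simpa using e.ne_zero 1
  have hxy : x ≠ y := by
    rw [hx, hy]
    intro h
    have := e.injective (Subtype.ext h)
    simp at this
  have hle : ∀ D : Submodule (ZMod 2) F, T ≤ D ↔ x ∈ D ∧ y ∈ D := by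
    intro D
    constructor
    · intro h
      exact ⟨h (hx ▸ (e 0).2), h (hy ▸ (e 1).2)⟩
    · rintro ⟨h1, h2⟩ z hz
      have h3 := congrArg Subtype.val (e.sum_repr ⟨z, hz⟩)
      simp only [Fin.sum_univ_two, Submodule.coe_add, Submodule.coe_smul, ← hx, ← hy] at h3
      rw [← h3]
      exact D.add_mem (D.smul_mem _ h1) (D.smul_mem _ h2)
  simp only [hle]
  obtain ⟨S, hS, a, ha, b, hb, hb0, hab⟩ := hex (x * y⁻¹)
    (mul_ne_zero hx0 (inv_ne_zero hy0))
    (fun h => hxy (by field_simp at h; exact h))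
  -- The translate of `S` by `y / b` sends `b` to `y` and `a` to `x`.
  have ht : b * y⁻¹ ≠ 0 := mul_ne_zero hb0 (inv_ne_zero hy0)
  let m : F ≃ₗ[ZMod 2] F := LinearEquiv.ofBijective (LinearMap.mulLeft (ZMod 2) (b * y⁻¹))
    (mulLeft_bijective₀ _ ht)
  have hmem : ∀ z, z ∈ S.map (m.symm : F →ₗ[ZMod 2] F) ↔ b * y⁻¹ * z ∈ S := by
    intro z
    rw [Submodule.mem_map_equiv]
    rfl
  refine ⟨S.map (m.symm : F →ₗ[ZMod 2] F), ⟨⟨?_, S, hS, _, ht, hmem⟩, ?_, ?_⟩, ?_⟩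
  · rw [LinearEquiv.finrank_map_eq, hk S hS]
  · rw [hmem]
    convert ha using 1
    rw [hab]; ring
  · rw [hmem]
    convert hb using 1
    field_simp
  · rintro D ⟨⟨-, S', hS', t', ht', hD⟩, hxD, hyD⟩
    rw [hD] at hxD hyD
    have ha' : a = b * y⁻¹ * x := by rw [hab]; ring
    obtain ⟨s, hs, hss⟩ := huniq S hS S' hS' a ha b hb _ hxD _ hyD
      (by rw [ha']; exact mul_ne_zero ht hx0) hb0 (mul_ne_zero ht' hx0) (mul_ne_zero ht' hy0)
      (by rintro rfl; field_simp at ha'; exact hxy ha'.symm)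
      (by rw [ha']; field_simp)
    have hst : t' = s * (b * y⁻¹) := by
      apply mul_right_cancel₀ hx0
      rw [hs, ha']; ring
    ext z
    rw [hD, hmem, hss, hst, mul_assoc s]

/-- The elements fixed by the `k`-th power of Frobenius, as an `𝔽_2`-subspace: the subfield of
order `2 ^ k` when `F` contains one. -/
def frobFixed (F : Type*) [Field F] [Algebra (ZMod 2) F] (k : ℕ) : Submodule (ZMod 2) F where
  carrier := {x | x ^ 2 ^ k = x}
  zero_mem' := by simp
  add_mem' := by
    intro a b ha hb
    have : CharP F 2 := charP_of_injective_algebraMap (algebraMap (ZMod 2) F).injective 2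
    simp only [Set.mem_ofPred_eq] at *
    rw [add_pow_char_pow, ha, hb]
  smul_mem' := by
    intro c x hx
    simp only [Set.mem_ofPred_eq] at *
    rw [Algebra.smul_def, mul_pow, hx, ← map_pow, ZMod.pow_card_pow]

theorem mem_frobFixed {k : ℕ} {x : F} : x ∈ frobFixed F k ↔ x ^ 2 ^ k = x := Iff.rfl

theorem mem_frobFixed_iff {k : ℕ} {x : F} (hx : x ≠ 0) :
    x ∈ frobFixed F k ↔ x ^ (2 ^ k - 1) = 1 := by
  have h : 2 ^ k = (2 ^ k - 1) + 1 := (Nat.sub_add_cancel Nat.one_le_two_pow).symm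
  rw [mem_frobFixed]
  conv_lhs => rw [h, pow_succ]
  exact mul_eq_right₀ hx

/-- If `2 ^ k - 1` divides the order of `Fˣ`, the fixed space has the full `2 ^ k` elements,
since `Fˣ` is cyclic. -/
theorem finrank_frobFixed [Fintype F] {k : ℕ} (hd : 2 ^ k - 1 ∣ Fintype.card F - 1) :
    Module.finrank (ZMod 2) (frobFixed F k) = k := by
  classical
  have h1 : Nat.card {u : Fˣ // u ^ (2 ^ k - 1) = 1} = 2 ^ k - 1 := by
    have h := IsCyclic.card_powMonoidHom_ker (G := Fˣ) (2 ^ k - 1)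
    rw [Nat.card_eq_fintype_card (α := Fˣ), Fintype.card_units, Nat.gcd_eq_right hd] at h
    exact h
  have h2 : Nat.card (frobFixed F k) = 2 ^ k := by
    have e : {u : Fˣ // u ^ (2 ^ k - 1) = 1} ≃ {z : frobFixed F k // z ≠ 0} :=
      { toFun := fun u => ⟨⟨u.1, (mem_frobFixed_iff u.1.ne_zero).2 (by
          have := congrArg Units.val u.2; simpa using this)⟩, by
            intro h; exact u.1.ne_zero (congrArg Subtype.val h)⟩
        invFun := fun z => ⟨Units.mk0 z.1.1 (fun h => z.2 (Subtype.ext h)), by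
          have := (mem_frobFixed_iff (fun h => z.2 (Subtype.ext h))).1 z.1.2
          ext; simpa using this⟩
        left_inv := fun u => by ext; rfl
        right_inv := fun z => by ext; rfl }
    rw [Nat.card_congr e] at h1
    have h3 := Nat.card_eq_fintype_card (α := {z : frobFixed F k // z ≠ 0})
    rw [h1, Fintype.card_subtype_compl, Fintype.card_subtype_eq, ← Nat.card_eq_fintype_card] at h3
    have : 0 < Nat.card (frobFixed F k) := Nat.card_pos
    have := Nat.one_le_two_pow (n := k)
    omega
  have h3 := Module.card_eq_pow_finrank (K := ZMod 2) (V := frobFixed F k)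
  rw [← Nat.card_eq_fintype_card, h2, ZMod.card] at h3
  exact (Nat.pow_right_injective le_rfl h3).symm

end Translates

section DiffList

variable {α : Type*} [DecidableEq α] [Mul α] [Inv α]

theorem mem_diffList {Fam : Finset (Finset α)} {r : α} :
    r ∈ diffList Fam ↔ ∃ b ∈ Fam, ∃ x ∈ b, ∃ y ∈ b, x ≠ y ∧ x * y⁻¹ = r := by
  simp only [diffList, Multiset.mem_bind, Multiset.mem_map, Finset.mem_val, Finset.mem_filter,
    Finset.mem_product, Prod.exists]
  grind

/-- When no ratio is repeated in the list of differences, a ratio determines the block and the pair. -/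
theorem eq_of_nodup_diffList {Fam : Finset (Finset α)} (h : (diffList Fam).Nodup)
    {b b' : Finset α} (hb : b ∈ Fam) (hb' : b' ∈ Fam) {x y x' y' : α}
    (hx : x ∈ b) (hy : y ∈ b) (hx' : x' ∈ b') (hy' : y' ∈ b') (hne : x ≠ y) (hne' : x' ≠ y')
    (heq : x * y⁻¹ = x' * y'⁻¹) : b = b' ∧ x = x' := by
  rw [diffList, Multiset.nodup_bind] at h
  have hbb : b = b' := by
    by_contra hcon
    have hd := h.2.forall hb hb' hcon
    exact Multiset.disjoint_left.1 hd
      (Multiset.mem_map.2 ⟨(x, y), by simp [hx, hy, hne], rfl⟩)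
      (Multiset.mem_map.2 ⟨(x', y'), by simp [hx', hy', hne'], heq.symm⟩)
  subst hbb
  have := Multiset.inj_on_of_nodup_map (h.1 b hb) (x, y) (by simp [hx, hy, hne])
    (x', y') (by simp [hx', hy', hne']) heq
  exact ⟨rfl, (Prod.ext_iff.1 this).1⟩

end DiffList

/-- Suppose there exists a cyclic `(𝔽_{2^v}^*, 2^k - 1, 1)` difference family each of
whose base blocks `B` has the property that `B ∪ {0}` is a `k`-dimensional
`𝔽_2`-subspace of `𝔽_{2^v}`. Then there exists a 2-analog of a `(v,k,1)`-design: a set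
`𝓓` of `k`-dimensional `𝔽_2`-subspaces of `𝔽_{2^v}` such that every 2-dimensional
`𝔽_2`-subspace of `𝔽_{2^v}` is contained in exactly one member of `𝓓`. -/
theorem stmt12 (v k : ℕ) (hvk : 2 < k ∧ k < v)
    (F : Type*) [Field F] [Fintype F] [DecidableEq F] [Algebra (ZMod 2) F]
    (hF : Fintype.card F = 2 ^ v)
    (Fam : Finset (Finset F))
    (hDF : IsCyclicDFOn (Finset.univ.filter fun x : F => x ≠ 0) (2 ^ k - 1) Fam)
    (hsub : ∀ b ∈ Fam, ∃ S : Submodule (ZMod 2) F,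
      Module.finrank (ZMod 2) S = k ∧ (S : Set F) = insert 0 ↑b) :
    ∃ 𝓓 : Set (Submodule (ZMod 2) F),
      (∀ S ∈ 𝓓, Module.finrank (ZMod 2) S = k) ∧
      ∀ T : Submodule (ZMod 2) F, Module.finrank (ZMod 2) T = 2 →
        ∃! S, S ∈ 𝓓 ∧ T ≤ S := by
  have hmem : ∀ (b : Finset F) (S : Submodule (ZMod 2) F), (S : Set F) = insert 0 ↑b →
      ∀ z, z ≠ 0 → z ∈ S → z ∈ b := by
    intro b S h z hz hzS
    have : z ∈ (S : Set F) := hzS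
    rw [h] at this
    simpa [hz] using this
  have hmem' : ∀ (b : Finset F) (S : Submodule (ZMod 2) F), (S : Set F) = insert 0 ↑b →
      ∀ z ∈ b, z ∈ S := by
    intro b S h z hz
    have : z ∈ (S : Set F) := by rw [h]; exact Or.inr hz
    exact this
  -- Uniqueness of representations within the blocks of the family.
  have key : (diffList Fam).Nodup → ∀ b ∈ Fam, ∀ b' ∈ Fam, ∀ S S' : Submodule (ZMod 2) F,
      (S : Set F) = insert 0 ↑b → (S' : Set F) = insert 0 ↑b' →
      ∀ x ∈ S, ∀ y ∈ S, ∀ x' ∈ S', ∀ y' ∈ S', x ≠ 0 → y ≠ 0 → x' ≠ 0 → y' ≠ 0 → x ≠ y →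
      x * y⁻¹ = x' * y'⁻¹ → ∃ t : F, x' = t * x ∧ ∀ z, z ∈ S ↔ t * z ∈ S' := by
    intro hnd b hb b' hb' S S' hS hS' x hx y hy x' hx' y' hy' hx0 hy0 hx0' hy0' hne heq
    have hne' : x' ≠ y' := by
      rintro rfl
      rw [mul_inv_cancel₀ hx0'] at heq
      exact hne (by field_simp at heq; exact heq)
    obtain ⟨rfl, rfl⟩ := eq_of_nodup_diffList hnd hb hb' (hmem b S hS x hx0 hx)
      (hmem b S hS y hy0 hy) (hmem b' S' hS' x' hx0' hx') (hmem b' S' hS' y' hy0' hy') hne hne' heq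
    obtain rfl : S = S' := SetLike.coe_injective (hS.trans hS'.symm)
    exact ⟨1, by simp, by simp⟩
  rcases hDF with ⟨-, -, hdiff⟩ | ⟨hcard, -, hdiff⟩
  · rw [one_smul] at hdiff
    have hnd : (diffList Fam).Nodup := hdiff ▸ Finset.nodup _
    refine exists_design_of_ratios k
      {S | Module.finrank (ZMod 2) S = k ∧ ∃ b ∈ Fam, (S : Set F) = insert 0 ↑b}
      (fun S hS => hS.1) ?_ ?_
    · intro r hr0 hr1
      have : r ∈ diffList Fam := by
        rw [hdiff, Finset.mem_val]; simp [hr0, hr1]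
      obtain ⟨b, hb, x, hx, y, hy, hxy, rfl⟩ := mem_diffList.1 this
      obtain ⟨S, hSk, hS⟩ := hsub b hb
      have hy0 : y ≠ 0 := by rintro rfl; simp at hr0
      exact ⟨S, ⟨hSk, b, hb, hS⟩, x, hmem' b S hS x hx, y, hmem' b S hS y hy, hy0, by field_simp⟩
    · rintro S ⟨-, b, hb, hS⟩ S' ⟨-, b', hb', hS'⟩
      exact key hnd b hb b' hb' S S' hS hS'
  · rw [one_smul] at hdiff
    have hnd : (diffList Fam).Nodup := hdiff ▸ Finset.nodup _
    have hdvd : 2 ^ k - 1 ∣ Fintype.card F - 1 := by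
      have hc : (Finset.univ.filter fun x : F => x ≠ 0).card = Fintype.card F - 1 := by
        rw [Finset.filter_ne', Finset.card_erase_of_mem (Finset.mem_univ _), Finset.card_univ]
      rw [hc] at hcard
      have h2 : (Fintype.card F - 1) ≡ 2 ^ k - 1 [MOD 2 ^ k - 1] :=
        Nat.ModEq.of_mul_right _ hcard
      exact (Nat.modEq_zero_iff_dvd).1 (h2.trans (by simp [Nat.ModEq]))
    -- A ratio of two elements of one block is never fixed by the `k`-th Frobenius power.
    have hnot : ∀ b ∈ Fam, ∀ S : Submodule (ZMod 2) F, (S : Set F) = insert 0 ↑b →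
        ∀ x ∈ S, ∀ y ∈ S, x ≠ 0 → y ≠ 0 → x ≠ y → (x * y⁻¹) ∉ frobFixed F k := by
      intro b hb S hS x hx y hy hx0 hy0 hxy hcon
      have h1 : x * y⁻¹ ∈ diffList Fam := mem_diffList.2
        ⟨b, hb, x, hmem b S hS x hx0 hx, y, hmem b S hS y hy0 hy, hxy, rfl⟩
      have h0 : x * y⁻¹ ≠ 0 := mul_ne_zero hx0 (inv_ne_zero hy0)
      rw [mem_frobFixed_iff h0] at hcon
      rw [hdiff, Finset.mem_val, Finset.mem_sdiff] at h1
      exact h1.2 (Finset.mem_filter.2 ⟨h1.1, hcon⟩)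
    have hdivmem : ∀ x ∈ frobFixed F k, ∀ y ∈ frobFixed F k, x * y⁻¹ ∈ frobFixed F k := by
      intro x hx y hy
      rw [mem_frobFixed] at *
      rw [mul_pow, inv_pow, hx, hy]
    refine exists_design_of_ratios k
      ({S | Module.finrank (ZMod 2) S = k ∧ ∃ b ∈ Fam, (S : Set F) = insert 0 ↑b} ∪
        {frobFixed F k}) ?_ ?_ ?_
    · rintro S (hS | rfl)
      · exact hS.1
      · exact finrank_frobFixed hdvd
    · intro r hr0 hr1
      by_cases hr : r ∈ frobFixed F k
      · exact ⟨_, Or.inr rfl, r, hr, 1, by simp [mem_frobFixed], one_ne_zero, by simp⟩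
      have : r ∈ diffList Fam := by
        rw [mem_frobFixed_iff hr0] at hr
        rw [hdiff, Finset.mem_val]; simp [hr0, hr]
      obtain ⟨b, hb, x, hx, y, hy, hxy, rfl⟩ := mem_diffList.1 this
      obtain ⟨S, hSk, hS⟩ := hsub b hb
      have hy0 : y ≠ 0 := by rintro rfl; simp at hr0
      exact ⟨S, Or.inl ⟨hSk, b, hb, hS⟩, x, hmem' b S hS x hx, y, hmem' b S hS y hy, hy0,
        by field_simp⟩
    · rintro S (⟨-, b, hb, hS⟩ | rfl) S' (⟨-, b', hb', hS'⟩ | rfl)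
      · exact key hnd b hb b' hb' S S' hS hS'
      · intro x hx y hy x' hx' y' hy' hx0 hy0 _ _ hne heq
        exact absurd (heq ▸ hdivmem x' hx' y' hy') (hnot b hb S hS x hx y hy hx0 hy0 hne)
      · intro x hx y hy x' hx' y' hy' hx0 hy0 hx0' hy0' hne heq
        refine absurd (heq ▸ hdivmem x hx y hy) (hnot b' hb' S' hS' x' hx' y' hy' hx0' hy0' ?_)
        rintro rfl
        rw [mul_inv_cancel₀ hx0'] at heq
        exact hne (by field_simp at heq; exact heq)
      · intro x hx y hy x' hx' y' hy' hx0 hy0 hx0' hy0' hne heq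
        -- The subfield is invariant under multiplication by its own nonzero elements.
        refine ⟨x' * x⁻¹, by field_simp, fun z => ⟨fun hz => ?_, fun hz => ?_⟩⟩
        · rw [mem_frobFixed] at *
          rw [mul_pow, mul_pow, inv_pow, hx, hx', hz]
        · have := hdivmem _ hz _ (hdivmem x' hx' x hx)
          rwa [show x' * x⁻¹ * z * (x' * x⁻¹)⁻¹ = z by field_simp] at this
end
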